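/- arXiv:1605.03756 — 2 statements merged into one kernel-verified Lean document; each statement's English description precedes it below -/
import Mathlib

section
/- Suppose there is an odd positive integer n with Xₙ = a(b^m − 1)/(b − 1) for some a ∈ {1, …, b−1} and m ≥ 1, and also an even positive integer n′ = 2n₁′ with X_{n′} = b^{m′} − 1 for some integer m′ ≥ 2. Then 2^{⌊(m′−1)/2⌋} divides a, m′ ≤ b³, and d < exp(b⁴). -/
/-!
Since `X_{2k} = 2 X_k² - 1`, the even-index hypothesis says `2 X_{n₁'}² = b^{m'}`. Hence `b` is even
and, as `m' ≥ 2`, so is `X_{n₁'}`; as even-index terms are odd, `n₁'` is odd. The recurrence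
`X_{k+2} + X_k = 2 X₁ X_{k+1}` shows that `X_j / X₁` is an odd integer for every odd `j`
(`pell_odd_index`), so `X_n`, `X₁` and `X_{n₁'}` have the same power of `2`. With
`s = ⌊(m' - 1)/2⌋`, `2^{2s+1} ∣ b^{m'}` gives `2^s ∣ X_{n₁'}`, hence `2^s ∣ X_n`, and since `b^m - 1`
is odd, `2^s ∣ a`. Now `2^s ≤ a < b` bounds `m'`, and `d < X₁² ≤ X_{n₁'}² < b^{m'}` bounds `d`.
-/

lemma eq_of_add_mul_sqrt_eq {d : ℕ} (hdns : ¬ IsSquare d) {p q r s : ℕ}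
    (h : (p : ℝ) + q * Real.sqrt d = r + s * Real.sqrt d) : p = r ∧ q = s := by
  have hirr : Irrational (Real.sqrt d) := irrational_sqrt_natCast_iff.mpr hdns
  have hqs : q = s := by
    by_contra hne
    have hne' : (q : ℝ) - s ≠ 0 := sub_ne_zero.mpr (by exact_mod_cast hne)
    refine hirr ⟨((r : ℚ) - p) / (q - s), ?_⟩
    push_cast
    rw [div_eq_iff hne']
    linarith
  subst hqs
  exact ⟨by exact_mod_cast add_right_cancel h, rfl⟩

section

variable {d : ℕ} {X Y : ℕ → ℕ}

lemma pell_add (hdns : ¬ IsSquare d)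
    (hXY : ∀ n : ℕ, 1 ≤ n → (X n : ℝ) + (Y n : ℝ) * Real.sqrt d =
        ((X 1 : ℝ) + (Y 1 : ℝ) * Real.sqrt d) ^ n)
    {i j : ℕ} (hi : 1 ≤ i) (hj : 1 ≤ j) :
    X (i + j) = X i * X j + d * Y i * Y j ∧ Y (i + j) = X i * Y j + Y i * X j := by
  apply eq_of_add_mul_sqrt_eq hdns
  have hs : Real.sqrt d * Real.sqrt d = d := Real.mul_self_sqrt (Nat.cast_nonneg d)
  rw [hXY _ (by omega), pow_add, ← hXY i hi, ← hXY j hj]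
  push_cast
  linear_combination (Y i * Y j : ℝ) * hs

lemma pell_norm (hdns : ¬ IsSquare d)
    (hpell : (X 1 : ℤ) ^ 2 - (d : ℤ) * (Y 1 : ℤ) ^ 2 = 1)
    (hXY : ∀ n : ℕ, 1 ≤ n → (X n : ℝ) + (Y n : ℝ) * Real.sqrt d =
        ((X 1 : ℝ) + (Y 1 : ℝ) * Real.sqrt d) ^ n)
    {k : ℕ} (hk : 1 ≤ k) : (X k : ℤ) ^ 2 - (d : ℤ) * (Y k : ℤ) ^ 2 = 1 := by
  induction k, hk using Nat.le_induction with
  | base => exact hpell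
  | succ k hk ih =>
    obtain ⟨h1, h2⟩ := pell_add hdns hXY hk le_rfl
    rw [h1, h2]
    push_cast
    linear_combination ((X 1 : ℤ) ^ 2 - d * (Y 1 : ℤ) ^ 2) * ih + hpell

lemma pell_double (hdns : ¬ IsSquare d)
    (hpell : (X 1 : ℤ) ^ 2 - (d : ℤ) * (Y 1 : ℤ) ^ 2 = 1)
    (hXY : ∀ n : ℕ, 1 ≤ n → (X n : ℝ) + (Y n : ℝ) * Real.sqrt d =
        ((X 1 : ℝ) + (Y 1 : ℝ) * Real.sqrt d) ^ n)
    {k : ℕ} (hk : 1 ≤ k) : X (2 * k) + 1 = 2 * X k ^ 2 := by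
  have h1 := (pell_add hdns hXY hk hk).1
  have h2 := pell_norm hdns hpell hXY hk
  rw [two_mul k, h1]
  zify
  linear_combination -h2

/-- For odd `j`, the quotient `X_j / X₁` is an odd integer: in
`X_{2k+3} = X₁ (2 X_{2k+2} - X_{2k+1} / X₁)` the parity of the second factor is preserved. -/
lemma pell_odd_index (hdns : ¬ IsSquare d)
    (hpell : (X 1 : ℤ) ^ 2 - (d : ℤ) * (Y 1 : ℤ) ^ 2 = 1)
    (hXY : ∀ n : ℕ, 1 ≤ n → (X n : ℝ) + (Y n : ℝ) * Real.sqrt d =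
        ((X 1 : ℝ) + (Y 1 : ℝ) * Real.sqrt d) ^ n)
    (k : ℕ) : ∃ c : ℤ, Odd c ∧ (X (2 * k + 1) : ℤ) = X 1 * c := by
  induction k with
  | zero => exact ⟨1, odd_one, by simp⟩
  | succ k ih =>
    obtain ⟨c, hc, h⟩ := ih
    refine ⟨2 * X (2 * k + 1 + 1) - c, (even_two_mul _).sub_odd hc, ?_⟩
    obtain ⟨h1, h2⟩ := pell_add hdns hXY (i := 2 * k + 1) (by omega) (le_refl 1)
    have h3 := (pell_add hdns hXY (i := 2 * k + 1 + 1) (by omega) (le_refl 1)).1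
    rw [show 2 * (k + 1) + 1 = 2 * k + 1 + 1 + 1 by ring, h3]
    rw [h2]
    push_cast
    have h1' : (X (2 * k + 1 + 1) : ℤ) = X (2 * k + 1) * X 1 + d * Y (2 * k + 1) * Y 1 := by
      exact_mod_cast h1
    linear_combination (-(X 1 : ℤ)) * h1' - (X (2 * k + 1) : ℤ) * hpell - h

end

/-- Suppose there is an odd positive index `n` with `Xₙ = a (bᵐ - 1)/(b - 1)`,
`a ∈ {1, …, b-1}`, `m ≥ 1`, and an even index `n' = 2 n₁'` with `X_{n'} = b^{m'} - 1`,
`m' ≥ 2`. Then `2^⌊(m'-1)/2⌋ ∣ a`, `m' ≤ b³`, and `d < exp (b⁴)`. -/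
theorem odd_and_even_solutions_bound
    (b : ℕ) (hb : 2 ≤ b)
    (d : ℕ) (hd : 2 ≤ d) (hdns : ¬ IsSquare d)
    (X Y : ℕ → ℕ)
    (hX1 : 0 < X 1) (hY1 : 0 < Y 1)
    (hpell : (X 1 : ℤ) ^ 2 - (d : ℤ) * (Y 1 : ℤ) ^ 2 = 1)
    (hfund : ∀ x y : ℕ, 0 < x → 0 < y →
      (x : ℤ) ^ 2 - (d : ℤ) * (y : ℤ) ^ 2 = 1 → X 1 ≤ x)
    (hXY : ∀ n : ℕ, 1 ≤ n →
      (X n : ℝ) + (Y n : ℝ) * Real.sqrt d =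
        ((X 1 : ℝ) + (Y 1 : ℝ) * Real.sqrt d) ^ n)
    (n a m : ℕ) (hn : 0 < n) (hnodd : Odd n)
    (ha : 1 ≤ a ∧ a ≤ b - 1) (hm : 1 ≤ m)
    (hrep : (b - 1) * X n = a * (b ^ m - 1))
    (n' n₁' m' : ℕ) (hn₁' : 0 < n₁') (hn' : n' = 2 * n₁') (hm' : 2 ≤ m')
    (hrep' : X n' = b ^ m' - 1) :
    2 ^ ((m' - 1) / 2) ∣ a ∧ m' ≤ b ^ 3 ∧ (d : ℝ) < Real.exp ((b : ℝ) ^ 4) := by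
  have hn1 : 1 ≤ n₁' := hn₁'
  have hsq : 2 * X n₁' ^ 2 = b ^ m' := by
    have h := pell_double hdns hpell hXY hn1
    rw [← hn', hrep'] at h
    have : 0 < b ^ m' := by positivity
    omega
  have hbeven : 2 ∣ b := Nat.prime_two.dvd_of_dvd_pow (hsq ▸ Dvd.intro _ rfl : 2 ∣ b ^ m')
  have hXeven : 2 ∣ X n₁' := by
    have h4 : 2 * 2 ∣ 2 * X n₁' ^ 2 := by
      rw [hsq, ← pow_two]
      exact (pow_dvd_pow 2 hm').trans (pow_dvd_pow_of_dvd hbeven m')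
    exact Nat.prime_two.dvd_of_dvd_pow (Nat.dvd_of_mul_dvd_mul_left two_pos h4)
  have hn1odd : Odd n₁' := by
    rw [← Nat.not_even_iff_odd]
    rintro ⟨k, hk⟩
    have h := pell_double hdns hpell hXY (k := k) (by omega)
    rw [two_mul k, ← hk] at h
    omega
  obtain ⟨k, hk⟩ := hn1odd
  obtain ⟨c, hc, hXc⟩ := pell_odd_index hdns hpell hXY k
  rw [← hk] at hXc
  obtain ⟨l, hl⟩ := hnodd
  obtain ⟨e, -, hXe⟩ := pell_odd_index hdns hpell hXY l
  rw [← hl] at hXe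
  set s := (m' - 1) / 2 with hs
  have hsX : 2 ^ s ∣ X n₁' := by
    have h : 2 * (2 ^ s) ^ 2 ∣ 2 * X n₁' ^ 2 := by
      rw [hsq, ← pow_mul, ← pow_succ']
      exact (pow_dvd_pow 2 (by omega)).trans (pow_dvd_pow_of_dvd hbeven m')
    exact (Nat.pow_dvd_pow_iff two_ne_zero).mp (Nat.dvd_of_mul_dvd_mul_left two_pos h)
  have hsX1 : ((2 ^ s : ℕ) : ℤ) ∣ X 1 := by
    have h : ((2 ^ s : ℕ) : ℤ) ∣ X 1 * c := hXc ▸ Int.natCast_dvd_natCast.mpr hsX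
    refine IsCoprime.dvd_of_dvd_mul_right ?_ h
    push_cast
    exact IsCoprime.pow_left (Int.isCoprime_iff_gcd_eq_one.mpr
      (by simpa [Int.gcd] using (Int.natAbs_odd.mpr hc).coprime_two_left))
  have hsXn : 2 ^ s ∣ X n :=
    Int.natCast_dvd_natCast.mp (hXe ▸ hsX1.mul_right e)
  have hsa : 2 ^ s ∣ a := by
    have h : 2 ^ s ∣ a * (b ^ m - 1) := hrep ▸ hsXn.mul_left (b - 1)
    refine Nat.Coprime.dvd_of_dvd_mul_right (Nat.Coprime.pow_left s ?_) h
    have hpos : 0 < b ^ m := by positivity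
    have hev : 2 ∣ b ^ m := hbeven.trans (dvd_pow_self b (by omega))
    exact Nat.coprime_two_left.mpr (Nat.odd_iff.mpr (by omega))
  have hm3 : m' ≤ b ^ 3 := by
    have h1 : 2 ^ s ≤ a := Nat.le_of_dvd ha.1 hsa
    have h2 : s < 2 ^ s := Nat.lt_two_pow_self
    have h3 : m' ≤ 2 * b := by omega
    nlinarith [Nat.mul_le_mul hb hb, Nat.mul_le_mul (Nat.mul_le_mul hb hb) (le_refl b)]
  refine ⟨hsa, hm3, ?_⟩
  have hXpos : 0 < X n₁' := by
    rcases Nat.eq_zero_or_pos (X n₁') with h | h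
    · rw [h] at hsq
      have : 0 < b ^ m' := by positivity
      omega
    · exact h
  have hX1le : X 1 ≤ X n₁' :=
    Nat.le_of_dvd hXpos (Int.natCast_dvd_natCast.mp ⟨c, hXc⟩)
  have hdlt : d < b ^ m' := by
    have h1 : X 1 ^ 2 = d * Y 1 ^ 2 + 1 := by
      zify
      linarith
    have h2 : d ≤ d * Y 1 ^ 2 := Nat.le_mul_of_pos_right d (by positivity)
    have h3 : X 1 ^ 2 ≤ X n₁' ^ 2 := Nat.pow_le_pow_left hX1le 2
    omega
  have hbexp : (b : ℝ) ≤ Real.exp b := by linarith [Real.add_one_le_exp (b : ℝ)]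
  calc (d : ℝ) < (b : ℝ) ^ m' := by exact_mod_cast hdlt
    _ ≤ Real.exp b ^ m' := by gcongr
    _ = Real.exp (m' * b) := (Real.exp_nat_mul _ _).symm
    _ ≤ Real.exp ((b : ℝ) ^ 4) := by
      apply Real.exp_le_exp.mpr
      have h : (m' : ℝ) ≤ (b : ℝ) ^ 3 := by exact_mod_cast hm3
      calc (m' : ℝ) * b ≤ (b : ℝ) ^ 3 * b := by gcongr
        _ = (b : ℝ) ^ 4 := by ring
end

section
/- Assume the setup described in the context, with a ≠ b − 1. Let Tₙ denote the n-th Chebyshev polynomial of the first kind (so that Xₙ = Tₙ(X₁)). Then the rational number Tₙ(−a/(b−1)) + c/(b−1), written in lowest terms, has numerator divisible by b^m; equivalently, for every prime p dividing b, the p-adic valuation of Tₙ(−a/(b−1)) + c/(b−1) is at least m·ν_p(b). -/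
/-!
Write `r = b - 1`, which is coprime to `b`. Since `X₁ = a (bᵐ - 1) / r`, the rationals `X₁` and
`-a / r` differ by `bᵐ` times an element of `ℤ[1/r]`. The polynomial `Tₙ` has integer coefficients,
so `Tₙ(X₁)` and `Tₙ(-a / r)` also differ by an element of `bᵐ ℤ[1/r]`. Finally
`Tₙ(X₁) = Xₙ = c (b^(mℓ) - 1) / r` (`pell_eq_chebyshev`) is congruent to `-c / r` modulo
`bᵐ ℤ[1/r]`, so `Tₙ(-a / r) + c / r` lies in `bᵐ ℤ[1/r]`. As `r` and `b` are coprime, the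
numerator is divisible by `bᵐ` (`dvd_num_of_mem_adjoin`).
-/

/-- The powers of a norm-one element `x + y√d` have rational part `Tₖ(x)`. Two consecutive
exponents are treated together because both sides satisfy the recurrence
`u (k + 2) = 2 x u (k + 1) - u k`. -/
lemma pow_eq_chebyshev_add (x y d : ℤ) (s : ℝ) (hs : s ^ 2 = d)
    (h : x ^ 2 - d * y ^ 2 = 1) (k : ℕ) :
    (∃ v : ℤ, ((x : ℝ) + y * s) ^ k =
      (((Polynomial.Chebyshev.T ℤ (k : ℤ)).eval x : ℤ) : ℝ) + v * s) ∧
    (∃ v : ℤ, ((x : ℝ) + y * s) ^ (k + 1) =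
      (((Polynomial.Chebyshev.T ℤ ((k : ℤ) + 1)).eval x : ℤ) : ℝ) + v * s) := by
  induction k with
  | zero => exact ⟨⟨0, by simp⟩, ⟨y, by simp⟩⟩
  | succ k ih =>
    obtain ⟨⟨v, hv⟩, ⟨w, hw⟩⟩ := ih
    refine ⟨⟨w, by push_cast; exact hw⟩, ⟨2 * x * w - v, ?_⟩⟩
    have hR : (x : ℝ) ^ 2 - d * y ^ 2 = 1 := by exact_mod_cast h
    have hrec : ((x : ℝ) + y * s) ^ (k + 1 + 1) =
        2 * x * ((x : ℝ) + y * s) ^ (k + 1) - ((x : ℝ) + y * s) ^ k := by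
      have : ((x : ℝ) + y * s) ^ 2 = 2 * x * (x + y * s) - 1 := by
        linear_combination (y : ℝ) ^ 2 * hs - hR
      rw [pow_succ, pow_succ]
      linear_combination ((x : ℝ) + y * s) ^ k * this
    rw [hrec, hv, hw]
    have hT : ((k + 1 : ℕ) : ℤ) + 1 = (k : ℤ) + 2 := by push_cast; ring
    rw [hT, Polynomial.Chebyshev.T_add_two]
    simp only [Polynomial.eval_sub, Polynomial.eval_mul, Polynomial.eval_X,
      Polynomial.eval_ofNat]
    push_cast
    ring

lemma pell_eq_chebyshev (d : ℕ) (hdns : ¬ IsSquare d) (x y z w n : ℕ)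
    (hpell : (x : ℤ) ^ 2 - (d : ℤ) * (y : ℤ) ^ 2 = 1)
    (h : (z : ℝ) + w * Real.sqrt d = ((x : ℝ) + y * Real.sqrt d) ^ n) :
    (z : ℤ) = (Polynomial.Chebyshev.T ℤ (n : ℤ)).eval (x : ℤ) := by
  have hs : (Real.sqrt d) ^ 2 = ((d : ℤ) : ℝ) := by
    rw [Real.sq_sqrt (by positivity)]; simp
  obtain ⟨⟨v, hv⟩, -⟩ := pow_eq_chebyshev_add x y d (Real.sqrt d) hs hpell n
  set t := (Polynomial.Chebyshev.T ℤ (n : ℤ)).eval (x : ℤ)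
  have hirr : Irrational (Real.sqrt d) := irrational_sqrt_natCast_iff.mpr hdns
  push_cast at hv
  rw [← h] at hv
  by_cases hwv : (w : ℤ) = v
  · have : (w : ℝ) = v := by exact_mod_cast hwv
    rw [this] at hv
    exact_mod_cast add_right_cancel hv
  · exfalso
    have hne : (w : ℝ) - v ≠ 0 := sub_ne_zero.mpr (by exact_mod_cast hwv)
    apply hirr
    refine ⟨((t : ℚ) - z) / (w - v), ?_⟩
    push_cast
    rw [div_eq_iff hne]
    linear_combination -hv

/-- Elements of `ℤ[1/r]` have denominator dividing a power of `r`. -/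
lemma exists_pow_mul_eq_int (r : ℕ) (hr : r ≠ 0) (q : ℚ)
    (hq : q ∈ Algebra.adjoin ℤ {(1 / r : ℚ)}) : ∃ (N : ℕ) (k : ℤ), (r : ℚ) ^ N * q = k := by
  have hr' : (r : ℚ) ≠ 0 := by exact_mod_cast hr
  induction hq using Algebra.adjoin_induction with
  | mem x hx =>
    rw [Set.mem_singleton_iff] at hx
    exact ⟨1, 1, by rw [hx]; field_simp; simp⟩
  | algebraMap k => exact ⟨0, k, by simp⟩
  | add x y _ _ hx hy =>
    obtain ⟨N, k, h⟩ := hx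
    obtain ⟨M, l, h'⟩ := hy
    refine ⟨N + M, r ^ M * k + r ^ N * l, ?_⟩
    push_cast
    rw [← h, ← h']; ring
  | mul x y _ _ hx hy =>
    obtain ⟨N, k, h⟩ := hx
    obtain ⟨M, l, h'⟩ := hy
    refine ⟨N + M, k * l, ?_⟩
    push_cast
    rw [← h, ← h']; ring

lemma dvd_num_of_mem_adjoin (r : ℕ) (hr : r ≠ 0) (B : ℤ) (hB : IsCoprime B (r : ℤ)) (q : ℚ)
    (hq : q ∈ Algebra.adjoin ℤ {(1 / r : ℚ)}) : B ∣ ((B : ℚ) * q).num := by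
  obtain ⟨N, k, h⟩ := exists_pow_mul_eq_int r hr q hq
  set z := (B : ℚ) * q with hz
  have e : z * z.den = z.num := Rat.mul_den_eq_num z
  have key : (r : ℤ) ^ N * z.num = B * (k * z.den) := by
    have : ((r : ℚ)) ^ N * z.num = B * (k * z.den) := by
      rw [← e, ← h, hz]; ring
    exact_mod_cast this
  exact (hB.pow_right (n := N)).dvd_of_dvd_mul_left ⟨_, key⟩

/-- In the setting of Problem 1 with `a ≠ b - 1`, the rational number
`Tₙ(-a/(b-1)) + c/(b-1)` (where `Tₙ` is the `n`-th Chebyshev polynomial of the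
first kind, so `Xₙ = Tₙ(X₁)`) has numerator divisible by `bᵐ`. -/
theorem chebyshev_value_numerator_divisibility
    (b : ℕ) (hb : 2 ≤ b)
    (d : ℕ) (hd : 2 ≤ d) (hdns : ¬ IsSquare d)
    (X Y : ℕ → ℕ)
    (hX1 : 0 < X 1) (hY1 : 0 < Y 1)
    (hpell : (X 1 : ℤ) ^ 2 - (d : ℤ) * (Y 1 : ℤ) ^ 2 = 1)
    (hfund : ∀ x y : ℕ, 0 < x → 0 < y →
      (x : ℤ) ^ 2 - (d : ℤ) * (y : ℤ) ^ 2 = 1 → X 1 ≤ x)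
    (hXY : ∀ n : ℕ, 1 ≤ n →
      (X n : ℝ) + (Y n : ℝ) * Real.sqrt d =
        ((X 1 : ℝ) + (Y 1 : ℝ) * Real.sqrt d) ^ n)
    (a m : ℕ) (ha : 1 ≤ a ∧ a ≤ (b - 1) ^ 2) (hm : 1 ≤ m)
    (hrep1 : (b - 1) * X 1 = a * (b ^ m - 1))
    (n c ℓ : ℕ) (hn : 1 < n) (hnodd : Odd n)
    (hc : 1 ≤ c ∧ c ≤ b - 1) (hℓ : 1 ≤ ℓ)
    (hrepn : (b - 1) * X n = c * (b ^ (m * ℓ) - 1))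
    (hab : a ≠ b - 1) :
    (b : ℤ) ^ m ∣
      (((Polynomial.Chebyshev.T ℚ n).eval (-(a : ℚ) / ((b : ℚ) - 1)) +
        (c : ℚ) / ((b : ℚ) - 1)).num) := by
  have hb1 : b - 1 ≠ 0 := by omega
  have hcast : ((b - 1 : ℕ) : ℚ) = (b : ℚ) - 1 := by
    rw [Nat.cast_sub (by omega)]; simp
  have hr : (b : ℚ) - 1 ≠ 0 := by rw [← hcast]; exact_mod_cast hb1
  have hpow : ∀ k : ℕ, ((b ^ k - 1 : ℕ) : ℚ) = (b : ℚ) ^ k - 1 := fun k => by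
    rw [Nat.cast_sub (Nat.one_le_pow _ _ (by omega))]; simp
  have h1 : ((b : ℚ) - 1) * X 1 = a * ((b : ℚ) ^ m - 1) := by
    rw [← hcast, ← hpow]; exact_mod_cast hrep1
  have h2 : ((b : ℚ) - 1) * X n = c * ((b : ℚ) ^ (m * ℓ) - 1) := by
    rw [← hcast, ← hpow]; exact_mod_cast hrepn
  have hXn : (X n : ℚ) = (Polynomial.Chebyshev.T ℚ (n : ℤ)).eval (X 1 : ℚ) := by
    have := pell_eq_chebyshev d hdns (X 1) (Y 1) (X n) (Y n) n hpell (hXY n (by omega))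
    have h' := congrArg (Int.cast : ℤ → ℚ) this
    rw [← eq_intCast (algebraMap ℤ ℚ) (Polynomial.eval _ _),
      Polynomial.Chebyshev.algebraMap_eval_T] at h'
    simpa using h'
  let S := Algebra.adjoin ℤ {(1 / (b - 1 : ℕ) : ℚ)}
  let i : S := ⟨1 / (b - 1 : ℕ), Algebra.subset_adjoin rfl⟩
  have hi : algebraMap S ℚ i = 1 / ((b : ℚ) - 1) := by
    rw [← hcast]; rfl
  obtain ⟨g, hg⟩ := Polynomial.sub_dvd_eval_sub (-(a : S) * i) (X 1 : S)
    (Polynomial.Chebyshev.T S (n : ℤ))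
  replace hg := congrArg (algebraMap S ℚ) hg
  simp only [map_sub, map_mul, map_neg, map_natCast, hi,
    Polynomial.Chebyshev.algebraMap_eval_T] at hg
  rw [← hXn] at hg
  obtain ⟨l, rfl⟩ : ∃ l, ℓ = l + 1 := ⟨ℓ - 1, by omega⟩
  have hval : (Polynomial.Chebyshev.T ℚ n).eval (-(a : ℚ) / ((b : ℚ) - 1)) +
        (c : ℚ) / ((b : ℚ) - 1) =
      (((b : ℤ) ^ m : ℤ) : ℚ) *
        algebraMap S ℚ (-(a : S) * i * g + c * i * (b : S) ^ (m * l)) := by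
    have hx1 : (X 1 : ℚ) = a * ((b : ℚ) ^ m - 1) * (1 / ((b : ℚ) - 1)) := by
      field_simp; linear_combination h1
    have hxn : (X n : ℚ) = c * ((b : ℚ) ^ (m * (l + 1)) - 1) * (1 / ((b : ℚ) - 1)) := by
      field_simp; linear_combination h2
    simp only [map_add, map_mul, map_neg, map_natCast, map_pow, hi]
    have e : -(a : ℚ) / ((b : ℚ) - 1) = -(a : ℚ) * (1 / ((b : ℚ) - 1)) := by ring
    rw [e]
    rw [hx1, hxn, mul_add, pow_add, mul_one] at hg
    push_cast
    linear_combination hg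
  rw [hval]
  refine dvd_num_of_mem_adjoin (b - 1) hb1 _ ?_ _
    (-(a : S) * i * g + c * i * (b : S) ^ (m * l)).2
  refine IsCoprime.pow_left ⟨1, -1, ?_⟩
  push_cast [Nat.cast_sub (show 1 ≤ b by omega)]
  ring
end
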